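/- arXiv:1210.0420 — 4 statements merged into one kernel-verified Lean document; each statement's English description precedes it below -/
import Mathlib

section
/- Let T ⊆ ℝ^n be semi-linear. If T is not essentially convex, then this is witnessed by rational points: there exist p, q ∈ T, all of whose coordinates are rational, such that infinitely many points of the closed segment [p, q] do not belong to T. -/
/-!
The set `T` is a union of sign classes of finitely many rational affine functions `h i`
(`IsSemilinear.exists_signs`), and each sign class is convex.

If `[p, q]` has infinitely many points outside `T`, the pigeonhole principle yields two of them, with
parameters `a < b`, on which all `h i` have the same signs. Pick rational `s < t` in `(a, b)`; the
points `u`, `v` of `[p, q]` with parameters `s`, `t` then lie in that sign class as well. As `s` and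
`t` are rational, prescribing the signs of all `h i` at `p`, `q`, `u`, `v` is a system of rational
linear conditions on the pair `(p, q)`, so its real solution can be replaced by a rational one.

The replacement (`exists_ratLinear_sign`) is made by applying to every coordinate a `ℚ`-linear map
`φ : ℝ → ℚ` with `φ 1 = 1` which preserves the signs of finitely many given reals. Such a map
exists because moving the elements of a Hamel basis of `ℝ` slightly, to rational numbers, respects
finitely many strict inequalities, while equalities are preserved by linearity.
The new points satisfy `p' ∈ T` and `u' ∉ T`, so `p' ≠ q'`, and the infinitely many points of
`[u', v'] ⊆ [p', q']` all lie in the sign class of `u'`, outside `T`.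
-/

/-- A set is essentially convex if for all `p, q` in the set, only finitely many
points of the closed segment between `p` and `q` fail to belong to the set. -/
def EssentiallyConvex {n : ℕ} (S : Set (Fin n → ℝ)) : Prop :=
  ∀ p ∈ S, ∀ q ∈ S, (segment ℝ p q \ S).Finite

/-- An affine function with rational coefficients. -/
def IsRatAffine {n : ℕ} (f : (Fin n → ℝ) → ℝ) : Prop :=
  ∃ (a : Fin n → ℚ) (b : ℚ), ∀ x, f x = (∑ i, (a i : ℝ) * x i) + (b : ℝ)

/-- A basic semi-linear set: finitely many non-strict and strict rational
affine inequalities. -/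
def IsBasicSemilinear {n : ℕ} (B : Set (Fin n → ℝ)) : Prop :=
  ∃ (k m : ℕ) (f : Fin k → ((Fin n → ℝ) → ℝ)) (g : Fin m → ((Fin n → ℝ) → ℝ)),
    (∀ i, IsRatAffine (f i)) ∧ (∀ j, IsRatAffine (g j)) ∧
    B = {x : Fin n → ℝ | (∀ i, f i x ≤ 0) ∧ (∀ j, g j x < 0)}

/-- A semi-linear set: a finite union of basic semi-linear sets. -/
def IsSemilinear {n : ℕ} (S : Set (Fin n → ℝ)) : Prop :=
  ∃ (N : ℕ) (B : Fin N → Set (Fin n → ℝ)),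
    (∀ i, IsBasicSemilinear (B i)) ∧ S = ⋃ i, B i

/-- Finitely many strict inequalities `y < 0` survive under a suitable `ℚ`-linear map `ℝ → ℚ`:
the maps are parametrised by their values on a Hamel basis, the inequalities form an open condition
on these values that holds for the inclusion `ℝ → ℝ`, and rational values are dense. -/
lemma exists_ratLinear_neg (F : Set ℝ) (hF : F.Finite) :
    ∃ φ : ℝ →ₗ[ℚ] ℚ, ∀ y ∈ F, y < 0 → φ y < 0 := by
  let B := Module.Basis.ofVectorSpace ℚ ℝ
  let G : ℝ → (Module.Basis.ofVectorSpaceIndex ℚ ℝ → ℝ) → ℝ :=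
    fun y r => (B.repr y).sum fun j c => (c : ℝ) * r j
  have hG : ∀ y, Continuous (G y) := fun y => by
    simp only [G, Finsupp.sum]
    fun_prop
  have hGB : ∀ y, G y (fun j => B j) = y := fun y => by
    have := B.linearCombination_repr y
    rw [Finsupp.linearCombination_apply] at this
    simpa only [G, Rat.smul_def] using this
  have hopen : IsOpen (⋂ y ∈ {y ∈ F | y < 0}, {r | G y r < 0}) :=
    (hF.subset (Set.sep_subset _ _)).isOpen_biInter
      fun y _ => isOpen_lt (hG y) continuous_const
  have hdense : DenseRange
      (Pi.map fun (_ : Module.Basis.ofVectorSpaceIndex ℚ ℝ) (x : ℚ) => (x : ℝ)) :=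
    DenseRange.piMap fun _ => Rat.denseRange_cast
  obtain ⟨r, hr⟩ := hdense.exists_mem_open hopen
    ⟨fun j => B j, by
      simp only [Set.mem_iInter, Set.mem_ofPred_eq]
      intro y hy
      rw [hGB]
      exact hy.2⟩
  refine ⟨B.constr ℚ r, fun y hy hy0 => ?_⟩
  simp only [Set.mem_iInter, Set.mem_ofPred_eq] at hr
  have h1 := hr y ⟨hy, hy0⟩
  have h2 : ((B.constr ℚ r y : ℚ) : ℝ) = G y (Pi.map (fun _ (x : ℚ) => (x : ℝ)) r) := by
    simp [G, Module.Basis.constr_apply, Finsupp.sum]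
  rw [← h2] at h1
  exact_mod_cast h1

/-- A `ℚ`-linear retraction `ℝ → ℚ` preserving the signs of finitely many given reals. -/
lemma exists_ratLinear_sign (F : Set ℝ) (hF : F.Finite) :
    ∃ φ : ℝ →ₗ[ℚ] ℚ, φ 1 = 1 ∧
      ∀ y ∈ F, SignType.sign ((φ y : ℚ) : ℝ) = SignType.sign y := by
  obtain ⟨φ, hφ⟩ := exists_ratLinear_neg ({-1} ∪ (F ∪ Set.image (fun y => -y) F))
    ((Set.finite_singleton _).union (hF.union (hF.image _)))
  have h1 : 0 < φ 1 := by
    have := hφ (-1) (by simp) (by norm_num)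
    rw [map_neg] at this
    linarith
  refine ⟨(φ 1)⁻¹ • φ, by simp [h1.ne'], fun y hy => ?_⟩
  have key : ∀ z : ℚ, z < 0 → (φ 1)⁻¹ * z < 0 :=
    fun z hz => mul_neg_of_pos_of_neg (inv_pos.2 h1) hz
  rcases lt_trichotomy y 0 with h | rfl | h
  · have h2 := key _ (hφ y (by simp [hy]) h)
    rw [sign_neg h, sign_neg]
    simpa only [LinearMap.smul_apply, smul_eq_mul] using (by exact_mod_cast h2)
  · simp
  · have h2 := key _ (hφ (-y) (by simp [hy]) (by linarith))
    rw [map_neg, mul_neg, neg_lt_zero] at h2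
    rw [sign_pos h, sign_pos]
    simpa only [LinearMap.smul_apply, smul_eq_mul] using (by exact_mod_cast h2)

lemma IsSemilinear.exists_signs {n : ℕ} {T : Set (Fin n → ℝ)} (hT : IsSemilinear T) :
    ∃ (ι : Type) (_ : Finite ι) (h : ι → (Fin n → ℝ) → ℝ), (∀ i, IsRatAffine (h i)) ∧
      ∀ x y, (∀ i, SignType.sign (h i x) = SignType.sign (h i y)) → x ∈ T → y ∈ T := by
  obtain ⟨N, B, hB, rfl⟩ := hT
  choose k m f g hf hg hB using hB
  refine ⟨Σ j, Fin (k j) ⊕ Fin (m j), inferInstance,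
    fun i => Sum.elim (f i.1) (g i.1) i.2, ?_, ?_⟩
  · rintro ⟨j, i | i⟩
    · exact hf j i
    · exact hg j i
  · intro x y hs hx
    rw [Set.mem_iUnion] at hx ⊢
    obtain ⟨j, hj⟩ := hx
    refine ⟨j, ?_⟩
    rw [hB] at hj ⊢
    refine ⟨fun i => ?_, fun i => ?_⟩
    · have h1 := hs ⟨j, Sum.inl i⟩
      have h2 := hj.1 i
      simp only [Sum.elim_inl] at h1
      rw [← sign_nonpos_iff] at h2 ⊢
      rwa [← h1]
    · have h1 := hs ⟨j, Sum.inr i⟩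
      have h2 := hj.2 i
      simp only [Sum.elim_inr] at h1
      rw [← sign_eq_neg_one_iff] at h2 ⊢
      rwa [← h1]

lemma IsRatAffine.lineMap {n : ℕ} {h : (Fin n → ℝ) → ℝ} (hh : IsRatAffine h)
    (p q : Fin n → ℝ) (t : ℝ) :
    h (AffineMap.lineMap p q t) = h p + t * (h q - h p) := by
  obtain ⟨a, b, hab⟩ := hh
  have : ∑ i, (a i : ℝ) * (AffineMap.lineMap p q t : Fin n → ℝ) i
      = ∑ i, (a i : ℝ) * p i + t * (∑ i, (a i : ℝ) * q i - ∑ i, (a i : ℝ) * p i) := by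
    rw [← Finset.sum_sub_distrib, Finset.mul_sum, ← Finset.sum_add_distrib]
    refine Finset.sum_congr rfl fun i _ => ?_
    simp [AffineMap.lineMap_apply]
    ring
  rw [hab, hab, hab, this]
  ring

/-- A function affine in the parameter keeps its sign between two parameters of equal sign. -/
lemma sign_affine_between {c d a b t : ℝ} (hat : a ≤ t) (htb : t ≤ b)
    (hs : SignType.sign (c + a * d) = SignType.sign (c + b * d)) :
    SignType.sign (c + t * d) = SignType.sign (c + a * d) := by
  rcases lt_trichotomy (c + a * d) 0 with h | h | h
  · rw [sign_neg h] at hs ⊢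
    have h2 := sign_eq_neg_one_iff.1 hs.symm
    apply sign_neg
    rcases le_total 0 d with hd | hd <;> nlinarith
  · rw [h, sign_zero] at hs ⊢
    have h2 := sign_eq_zero_iff.1 hs.symm
    rw [sign_eq_zero_iff]
    apply le_antisymm <;> rcases le_total 0 d with hd | hd <;> nlinarith
  · rw [sign_pos h] at hs ⊢
    have h2 := sign_eq_one_iff.1 hs.symm
    apply sign_pos
    rcases le_total 0 d with hd | hd <;> nlinarith

/-- A `ℚ`-linear map fixing `1`, applied coordinatewise, commutes with rational affine functions. -/
lemma IsRatAffine.map_ratLinear {n : ℕ} {h : (Fin n → ℝ) → ℝ} (hh : IsRatAffine h)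
    (φ : ℝ →ₗ[ℚ] ℚ) (h1 : φ 1 = 1) (x : Fin n → ℝ) :
    h (fun i => (φ (x i) : ℝ)) = (φ (h x) : ℝ) := by
  obtain ⟨a, b, hab⟩ := hh
  have hb : φ (b : ℝ) = b := by
    have := φ.map_smul b 1
    simpa [Rat.smul_def, h1] using this
  have ha : ∀ (c : ℚ) (y : ℝ), φ ((c : ℝ) * y) = c * φ y := fun c y => by
    have := φ.map_smul c y
    simpa [Rat.smul_def] using this
  rw [hab, hab, map_add, map_sum, hb]
  simp [ha]

lemma lineMap_map_ratLinear {n : ℕ} (φ : ℝ →ₗ[ℚ] ℚ) (p q : Fin n → ℝ) (s : ℚ) :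
    (fun i => (φ ((AffineMap.lineMap p q (s : ℝ) : Fin n → ℝ) i) : ℝ))
      = AffineMap.lineMap (fun i => (φ (p i) : ℝ)) (fun i => (φ (q i) : ℝ)) (s : ℝ) := by
  funext i
  have ha : ∀ y : ℝ, φ ((s : ℝ) * y) = s * φ y := fun y => by
    have := φ.map_smul s y
    simpa [Rat.smul_def] using this
  simp [AffineMap.lineMap_apply, ha]

theorem semilinear_not_essentially_convex_rational_witnesses
    (n : ℕ) (T : Set (Fin n → ℝ)) (hT : IsSemilinear T)
    (h : ¬ EssentiallyConvex T) :
    ∃ p ∈ T, ∃ q ∈ T,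
      (∀ i : Fin n, ∃ r : ℚ, p i = (r : ℝ)) ∧
      (∀ i : Fin n, ∃ r : ℚ, q i = (r : ℝ)) ∧
      (segment ℝ p q \ T).Infinite := by
  obtain ⟨ι, _, H, hH, hHT⟩ := hT.exists_signs
  simp only [EssentiallyConvex, not_forall] at h
  obtain ⟨p, hp, q, hq, hinf⟩ := h
  have hI : {t : ℝ | t ∈ Set.Icc (0 : ℝ) 1 ∧ AffineMap.lineMap p q t ∉ T}.Infinite := by
    intro hfin
    refine hinf ((hfin.image (AffineMap.lineMap p q)).subset ?_)
    rintro x ⟨hx, hxT⟩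
    rw [segment_eq_image_lineMap] at hx
    obtain ⟨t, ht, rfl⟩ := hx
    exact ⟨t, ⟨ht, hxT⟩, rfl⟩
  obtain ⟨a, ha, b, hb, hab, hsign⟩ : ∃ a ∈ {t : ℝ | t ∈ Set.Icc (0 : ℝ) 1 ∧
      AffineMap.lineMap p q t ∉ T}, ∃ b ∈ {t : ℝ | t ∈ Set.Icc (0 : ℝ) 1 ∧
      AffineMap.lineMap p q t ∉ T}, a < b ∧ ∀ i, SignType.sign (H i (AffineMap.lineMap p q a))
        = SignType.sign (H i (AffineMap.lineMap p q b)) := by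
    obtain ⟨a, ha, b, hb, hne, he⟩ := hI.exists_ne_map_eq_of_mapsTo
      (f := fun t i => SignType.sign (H i (AffineMap.lineMap p q t)))
      (t := Set.univ) (fun _ _ => Set.mem_univ _) Set.finite_univ
    rcases lt_or_gt_of_ne hne with hlt | hlt
    · exact ⟨a, ha, b, hb, hlt, fun i => congrFun he i⟩
    · exact ⟨b, hb, a, ha, hlt, fun i => (congrFun he i).symm⟩
  obtain ⟨s, has, hsb⟩ := exists_rat_btwn hab
  obtain ⟨t, hst, htb⟩ := exists_rat_btwn hsb
  have hmid : ∀ r : ℝ, a ≤ r → r ≤ b → ∀ i, SignType.sign (H i (AffineMap.lineMap p q r))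
      = SignType.sign (H i (AffineMap.lineMap p q a)) := by
    intro r h1 h2 i
    have h3 := hsign i
    simp only [(hH i).lineMap] at h3 ⊢
    exact sign_affine_between h1 h2 h3
  -- `φ` has to preserve the sign of every `H i` at `p`, `q` and the points with parameters `s`, `t`.
  obtain ⟨φ, hφ1, hφ⟩ := exists_ratLinear_sign
    (⋃ x ∈ ({p, q, AffineMap.lineMap p q (s : ℝ), AffineMap.lineMap p q (t : ℝ)} :
      Set (Fin n → ℝ)), Set.range fun i => H i x)
    ((Set.toFinite _).biUnion fun x _ => Set.finite_range _)
  have hΦ : ∀ x ∈ ({p, q, AffineMap.lineMap p q (s : ℝ), AffineMap.lineMap p q (t : ℝ)} :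
      Set (Fin n → ℝ)), ∀ i, SignType.sign (H i (fun j => (φ (x j) : ℝ)))
        = SignType.sign (H i x) := by
    intro x hx i
    rw [(hH i).map_ratLinear φ hφ1]
    exact hφ _ (Set.mem_biUnion hx ⟨i, rfl⟩)
  have hs' := hΦ (AffineMap.lineMap p q (s : ℝ)) (by simp)
  have ht' := hΦ (AffineMap.lineMap p q (t : ℝ)) (by simp)
  simp only [lineMap_map_ratLinear] at hs' ht'
  have hp' : (fun i => (φ (p i) : ℝ)) ∈ T := hHT p _ (fun i => (hΦ p (by simp) i).symm) hp
  have hq' : (fun i => (φ (q i) : ℝ)) ∈ T := hHT q _ (fun i => (hΦ q (by simp) i).symm) hq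
  refine ⟨_, hp', _, hq', fun i => ⟨_, rfl⟩, fun i => ⟨_, rfl⟩, ?_⟩
  generalize (fun i => (φ (p i) : ℝ)) = p' at *
  generalize (fun i => (φ (q i) : ℝ)) = q' at *
  have hout : ∀ r ∈ Set.Icc (s : ℝ) t, AffineMap.lineMap p' q' r ∉ T := by
    intro r hr hrT
    refine ha.2 (hHT _ _ (fun i => ?_) hrT)
    rw [← hmid s has.le hsb.le i, ← hs' i]
    have h3 : SignType.sign (H i (AffineMap.lineMap p' q' (s : ℝ)))
        = SignType.sign (H i (AffineMap.lineMap p' q' (t : ℝ))) := by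
      rw [hs' i, ht' i, hmid s has.le hsb.le i, hmid t (has.trans hst).le htb.le i]
    simp only [(hH i).lineMap] at h3 ⊢
    exact sign_affine_between hr.1 hr.2 h3
  have hne : p' ≠ q' := by
    rintro rfl
    exact hout s ⟨le_rfl, hst.le⟩ (by simpa using hp')
  refine Set.infinite_of_injOn_mapsTo (f := AffineMap.lineMap p' q')
    ((AffineMap.lineMap_injective ℝ hne).injOn) ?_ (Set.Icc_infinite hst)
  intro r hr
  refine ⟨?_, hout r hr⟩
  rw [segment_eq_image_lineMap]
  exact ⟨r, ⟨(ha.1.1.trans has.le).trans hr.1, (hr.2.trans htb.le).trans hb.1.2⟩, rfl⟩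
end

section
/- Let S ⊆ ℝ^n be a closed semi-linear set. Then S is convex if and only if there exist m ∈ ℕ and affine functions f_1, …, f_m : ℝ^n → ℝ with rational coefficients such that S = {x ∈ ℝ^n | f_1(x) ≤ 0 ∧ … ∧ f_m(x) ≤ 0} (i.e., S is a rational polyhedron; this is the paper's characterization of primitive positive definability over (ℝ; +, 1, ≤)). -/
/-! ### Fourier–Motzkin elimination -/

/-- Functionals on the `ℚ`-space `M` can be eliminated: for each finite set `F ⊆ L × M`, the condition
on a functional `φ` of `L` that some functional `ψ` of `M` makes `φ + ψ` nonpositive on `F`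
is equivalent to `φ` being nonpositive on some finite set. -/
def ElimProp (M : Type) [AddCommGroup M] [Module ℚ M] : Prop :=
  ∀ (L : Type) [AddCommGroup L] [Module ℚ L] (F : Finset (L × M)),
    ∃ G : Finset L, ∀ φ : L →ₗ[ℚ] ℝ,
      (∀ g ∈ G, φ g ≤ 0) ↔ ∃ ψ : M →ₗ[ℚ] ℝ, ∀ p ∈ F, φ p.1 + ψ p.2 ≤ 0

lemma exists_between_finite (A B : Set ℝ) (hA : A.Finite) (hB : B.Finite)
    (h : ∀ a ∈ A, ∀ b ∈ B, a ≤ b) : ∃ t, (∀ a ∈ A, a ≤ t) ∧ ∀ b ∈ B, t ≤ b := by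
  rcases A.eq_empty_or_nonempty with rfl | hAn
  · obtain ⟨t, ht⟩ := hB.bddBelow
    exact ⟨t, by simp, fun b hb => ht hb⟩
  rcases B.eq_empty_or_nonempty with rfl | hBn
  · obtain ⟨t, ht⟩ := hA.bddAbove
    exact ⟨t, fun a ha => ht ha, by simp⟩
  · obtain ⟨t, h1, h2⟩ := exists_between_of_forall_le hAn hBn h
    exact ⟨t, fun a ha => h1 ha, fun b hb => h2 hb⟩

lemma ratLinear_apply (ψ : ℚ →ₗ[ℚ] ℝ) (q : ℚ) : ψ q = (q : ℝ) * ψ 1 := by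
  have := ψ.map_smul q 1
  rwa [smul_eq_mul, mul_one, Rat.smul_def] at this

/-- Elimination of a single real variable: combine each upper bound with each lower bound. -/
lemma elimProp_rat : ElimProp ℚ := by
  classical
  intro L _ _ F
  refine ⟨(F.filter (fun p => p.2 = 0)).image Prod.fst ∪
    ((F.filter (fun p => 0 < p.2)) ×ˢ (F.filter (fun p => p.2 < 0))).image
      (fun r => r.1.2 • r.2.1 - r.2.2 • r.1.1), fun φ => ⟨fun h => ?_, ?_⟩⟩
  · have h0 : ∀ p ∈ F, p.2 = 0 → φ p.1 ≤ 0 := by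
      intro p hp hp0
      refine h _ (Finset.mem_union_left _ (Finset.mem_image_of_mem _ ?_))
      simp [hp, hp0]
    have h1 : ∀ p ∈ F, ∀ q ∈ F, 0 < p.2 → q.2 < 0 →
        (p.2 : ℝ) * φ q.1 - (q.2 : ℝ) * φ p.1 ≤ 0 := by
      intro p hp q hq hpos hneg
      have := h (p.2 • q.1 - q.2 • p.1) (Finset.mem_union_right _
        (Finset.mem_image.2 ⟨(p, q), by simp [hp, hq, hpos, hneg], rfl⟩))
      simpa [Rat.smul_def] using this
    obtain ⟨t, ht1, ht2⟩ := exists_between_finite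
      ((fun q : L × ℚ => -φ q.1 / (q.2 : ℝ)) '' {q | q ∈ F ∧ q.2 < 0})
      ((fun q : L × ℚ => -φ q.1 / (q.2 : ℝ)) '' {q | q ∈ F ∧ 0 < q.2})
      (Set.Finite.image _ (F.finite_toSet.subset fun q hq => hq.1))
      (Set.Finite.image _ (F.finite_toSet.subset fun q hq => hq.1))
      (by
        rintro _ ⟨q, ⟨hq, hneg⟩, rfl⟩ _ ⟨p, ⟨hp, hpos⟩, rfl⟩
        have hpos' : (0 : ℝ) < p.2 := by exact_mod_cast hpos
        have hneg' : (q.2 : ℝ) < 0 := by exact_mod_cast hneg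
        have := h1 p hp q hq hpos hneg
        show -φ q.1 / (q.2 : ℝ) ≤ -φ p.1 / (p.2 : ℝ)
        rw [div_le_iff_of_neg hneg', div_mul_eq_mul_div, div_le_iff₀ hpos']
        nlinarith)
    refine ⟨LinearMap.toSpanSingleton ℚ ℝ t, fun p hp => ?_⟩
    rw [LinearMap.toSpanSingleton_apply, Rat.smul_def]
    rcases lt_trichotomy p.2 0 with hneg | hz | hpos
    · have hneg' : (p.2 : ℝ) < 0 := by exact_mod_cast hneg
      have := ht1 _ ⟨p, ⟨hp, hneg⟩, rfl⟩
      simp only [div_le_iff_of_neg hneg'] at this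
      linarith
    · simpa [hz] using h0 p hp hz
    · have hpos' : (0 : ℝ) < p.2 := by exact_mod_cast hpos
      have := ht2 _ ⟨p, ⟨hp, hpos⟩, rfl⟩
      simp only [le_div_iff₀ hpos'] at this
      linarith
  · rintro ⟨ψ, hψ⟩ g hg
    rcases Finset.mem_union.1 hg with hg | hg
    · obtain ⟨p, hp, rfl⟩ := Finset.mem_image.1 hg
      obtain ⟨hp, hp0⟩ := Finset.mem_filter.1 hp
      simpa [hp0] using hψ p hp
    · obtain ⟨⟨p, q⟩, hpq, rfl⟩ := Finset.mem_image.1 hg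
      obtain ⟨hp, hq⟩ := Finset.mem_product.1 hpq
      obtain ⟨hp, hpos⟩ := Finset.mem_filter.1 hp
      obtain ⟨hq, hneg⟩ := Finset.mem_filter.1 hq
      have hpos' : (0 : ℝ) < p.2 := by exact_mod_cast hpos
      have hneg' : (q.2 : ℝ) < 0 := by exact_mod_cast hneg
      have h1 := hψ p hp
      have h2 := hψ q hq
      rw [ratLinear_apply] at h1 h2
      simp only [map_sub, map_smul, Rat.smul_def]
      nlinarith [mul_nonneg_of_nonpos_of_nonpos h1 hneg'.le,
        mul_nonpos_of_nonneg_of_nonpos hpos'.le h2]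

lemma ElimProp.prod {M N : Type} [AddCommGroup M] [Module ℚ M] [AddCommGroup N] [Module ℚ N]
    (hM : ElimProp M) (hN : ElimProp N) : ElimProp (M × N) := by
  classical
  intro L _ _ F
  obtain ⟨G₁, h₁⟩ := hN (L × M) (F.image fun p => ((p.1, p.2.1), p.2.2))
  obtain ⟨G, h⟩ := hM L G₁
  refine ⟨G, fun φ => (h φ).trans ⟨?_, ?_⟩⟩
  · rintro ⟨ψ, hψ⟩
    obtain ⟨χ, hχ⟩ := (h₁ (φ.coprod ψ)).1 (by simpa using hψ)
    refine ⟨ψ.coprod χ, fun p hp => ?_⟩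
    have := hχ _ (Finset.mem_image_of_mem _ hp)
    simp only [LinearMap.coprod_apply] at this ⊢
    linarith
  · rintro ⟨ψ, hψ⟩
    refine ⟨ψ ∘ₗ LinearMap.inl ℚ M N, ?_⟩
    have := (h₁ (φ.coprod (ψ ∘ₗ LinearMap.inl ℚ M N))).2 ⟨ψ ∘ₗ LinearMap.inr ℚ M N, ?_⟩
    · simpa using this
    · intro q hq
      obtain ⟨p, hp, rfl⟩ := Finset.mem_image.1 hq
      have h2 := hψ p hp
      have h3 : ψ p.2 = ψ (p.2.1, 0) + ψ (0, p.2.2) := by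
        rw [← map_add]; simp
      simp only [LinearMap.coprod_apply, LinearMap.comp_apply, LinearMap.inl_apply,
        LinearMap.inr_apply]
      linarith

lemma ElimProp.of_equiv {M N : Type} [AddCommGroup M] [Module ℚ M] [AddCommGroup N] [Module ℚ N]
    (e : M ≃ₗ[ℚ] N) (hM : ElimProp M) : ElimProp N := by
  classical
  intro L _ _ F
  obtain ⟨G, h⟩ := hM L (F.image fun p => (p.1, e.symm p.2))
  refine ⟨G, fun φ => (h φ).trans ⟨?_, ?_⟩⟩
  · rintro ⟨ψ, hψ⟩
    refine ⟨ψ ∘ₗ e.symm.toLinearMap, fun p hp => ?_⟩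
    exact hψ _ (Finset.mem_image_of_mem _ hp)
  · rintro ⟨ψ, hψ⟩
    refine ⟨ψ ∘ₗ e.toLinearMap, fun q hq => ?_⟩
    obtain ⟨p, hp, rfl⟩ := Finset.mem_image.1 hq
    simpa using hψ p hp

lemma elimProp_pi (k : ℕ) : ElimProp (Fin k → ℚ) := by
  classical
  induction k with
  | zero =>
    intro L _ _ F
    refine ⟨F.image Prod.fst, fun φ => ⟨fun h => ⟨0, fun p hp => ?_⟩, ?_⟩⟩
    · simpa using h _ (Finset.mem_image_of_mem _ hp)
    · rintro ⟨ψ, hψ⟩ g hg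
      obtain ⟨p, hp, rfl⟩ := Finset.mem_image.1 hg
      have := hψ p hp
      rwa [Subsingleton.elim p.2 0, map_zero, add_zero] at this
  | succ k ih =>
    exact (elimProp_rat.prod ih).of_equiv (Fin.consLinearEquiv ℚ fun _ : Fin (k + 1) => ℚ)

/-! ### Rational polyhedra as finite sets of affine functions -/

/-- Evaluation at the point `x` of the affine function with coefficients `p.1` and constant term
`p.2`, as a `ℚ`-linear functional of the coefficients. -/
noncomputable def affEval {n : ℕ} (x : Fin n → ℝ) : ((Fin n → ℚ) × ℚ) →ₗ[ℚ] ℝ where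
  toFun p := (∑ i, (p.1 i : ℝ) * x i) + (p.2 : ℝ)
  map_add' p q := by
    simp only [Prod.fst_add, Prod.snd_add, Pi.add_apply, Rat.cast_add, add_mul,
      Finset.sum_add_distrib]
    ring
  map_smul' c p := by
    simp only [Prod.smul_fst, Prod.smul_snd, Pi.smul_apply, smul_eq_mul, Rat.cast_mul,
      Rat.smul_def, mul_add, Finset.mul_sum, mul_assoc, RingHom.id_apply]

lemma affEval_apply {n : ℕ} (x : Fin n → ℝ) (p : (Fin n → ℚ) × ℚ) :
    affEval x p = (∑ i, (p.1 i : ℝ) * x i) + (p.2 : ℝ) := rfl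

lemma affEval_single {n : ℕ} (x : Fin n → ℝ) (i : Fin n) :
    affEval x (Pi.single i 1, 0) = x i := by
  simp only [affEval_apply]
  rw [Finset.sum_eq_single i]
  · simp
  · intro j _ hj
    simp [hj]
  · simp

lemma affEval_one {n : ℕ} (x : Fin n → ℝ) : affEval x (0, 1) = 1 := by
  simp [affEval_apply]

lemma affEval_comb {n : ℕ} (x y : Fin n → ℝ) (a b : ℝ) (hab : a + b = 1)
    (p : (Fin n → ℚ) × ℚ) :
    affEval (a • x + b • y) p = a * affEval x p + b * affEval y p := by
  have : (p.2 : ℝ) = a * p.2 + b * p.2 := by rw [← add_mul, hab, one_mul]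
  simp only [affEval_apply, Pi.add_apply, Pi.smul_apply, smul_eq_mul, mul_add, Finset.mul_sum,
    Finset.sum_add_distrib]
  have h1 : ∀ i, (p.1 i : ℝ) * (a * x i) = a * (p.1 i * x i) := fun i => by ring
  have h2 : ∀ i, (p.1 i : ℝ) * (b * y i) = b * (p.1 i * y i) := fun i => by ring
  simp only [h1, h2]
  linarith

/-- A functional of positive height `ψ (0, 1)` is that height times the evaluation at a point. -/
lemma exists_point {n : ℕ} (ψ : ((Fin n → ℚ) × ℚ) →ₗ[ℚ] ℝ) (h : 0 < ψ (0, 1)) :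
    ∃ y : Fin n → ℝ, ∀ p, ψ p = ψ (0, 1) * affEval y p := by
  refine ⟨fun i => ψ (Pi.single i 1, 0) / ψ (0, 1), fun p => ?_⟩
  have hp : p = (∑ i, p.1 i • ((Pi.single i 1, 0) : (Fin n → ℚ) × ℚ)) + p.2 • (0, 1) := by
    ext j
    · simp [Prod.fst_sum, Finset.sum_apply, Pi.single_apply]
    · simp [Prod.snd_sum]
  conv_lhs => rw [hp]
  rw [map_add, map_sum, affEval_apply, mul_add, Finset.mul_sum]
  simp only [map_smul, Rat.smul_def]
  congr 1
  · refine Finset.sum_congr rfl fun i _ => ?_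
    field_simp
  · ring

/-- The rational polyhedron on which all affine functions in `F` are nonpositive. -/
def poly {n : ℕ} (F : Finset ((Fin n → ℚ) × ℚ)) : Set (Fin n → ℝ) :=
  {x | ∀ p ∈ F, affEval x p ≤ 0}

/-! ### Closed convex hulls of finite unions of polyhedra -/

/-- Two nonempty rational polyhedra have a closed convex hull that is a rational polyhedron. -/
lemma exists_hull_pair {n : ℕ} (F₁ F₂ : Finset ((Fin n → ℚ) × ℚ))
    (h₁ : (poly F₁).Nonempty) (h₂ : (poly F₂).Nonempty) :
    ∃ G : Finset ((Fin n → ℚ) × ℚ), poly F₁ ⊆ poly G ∧ poly F₂ ⊆ poly G ∧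
      ∀ T : Set (Fin n → ℝ), IsClosed T → Convex ℝ T → poly F₁ ⊆ T → poly F₂ ⊆ T →
        poly G ⊆ T := by
  classical
  -- The system says that `ψ` is nonpositive on `F₁`, `φ - ψ` is nonpositive on `F₂`,
  -- and both have nonnegative height.
  obtain ⟨G, hG⟩ := ((elimProp_pi n).prod elimProp_rat) ((Fin n → ℚ) × ℚ)
    ((insert (0, -1) F₁).image (fun p => (0, p)) ∪
      (insert (0, -1) F₂).image (fun p => (p, -p)))
  have key : ∀ x : Fin n → ℝ, x ∈ poly G ↔ ∃ ψ : ((Fin n → ℚ) × ℚ) →ₗ[ℚ] ℝ,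
      (∀ p ∈ insert (0, -1) F₁, ψ p ≤ 0) ∧
      (∀ p ∈ insert (0, -1) F₂, (affEval x - ψ) p ≤ 0) := by
    intro x
    refine (hG (affEval x)).trans (exists_congr fun ψ => ?_)
    constructor
    · intro h
      refine ⟨fun p hp => ?_, fun p hp => ?_⟩
      · simpa only [map_zero, zero_add] using
          h (0, p) (Finset.mem_union_left _ (Finset.mem_image_of_mem _ hp))
      · have := h (p, -p) (Finset.mem_union_right _ (Finset.mem_image_of_mem _ hp))
        rw [map_neg] at this
        rw [LinearMap.sub_apply]
        linarith
    · rintro ⟨ha, hb⟩ q hq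
      rcases Finset.mem_union.1 hq with hq | hq
      · obtain ⟨p, hp, rfl⟩ := Finset.mem_image.1 hq
        simpa only [map_zero, zero_add] using ha p hp
      · obtain ⟨p, hp, rfl⟩ := Finset.mem_image.1 hq
        have := hb p hp
        rw [LinearMap.sub_apply] at this
        show affEval x p + ψ (-p) ≤ 0
        rw [map_neg]
        linarith
  have hneg : ∀ ψ : ((Fin n → ℚ) × ℚ) →ₗ[ℚ] ℝ, ψ (0, -1) = -ψ (0, 1) := by
    intro ψ
    rw [← map_neg]
    simp
  have hins : ∀ (F : Finset ((Fin n → ℚ) × ℚ)) (x : Fin n → ℝ), x ∈ poly F →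
      ∀ p ∈ insert (0, -1) F, affEval x p ≤ 0 := by
    intro F x hx p hp
    rcases Finset.mem_insert.1 hp with rfl | hp
    · rw [hneg, affEval_one]; norm_num
    · exact hx p hp
  refine ⟨G, fun x hx => ?_, fun x hx => ?_, ?_⟩
  · exact (key x).2 ⟨affEval x, hins F₁ x hx, fun p _ => by simp⟩
  · exact (key x).2 ⟨0, fun p _ => by simp, fun p hp => by simpa using hins F₂ x hx p hp⟩
  · intro T hT hconv hT₁ hT₂ x hx
    obtain ⟨ψ, hψ₁, hψ₂⟩ := (key x).1 hx
    obtain ⟨z₁, hz₁⟩ := h₁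
    obtain ⟨z₂, hz₂⟩ := h₂
    have hl : 0 ≤ ψ (0, 1) := by
      have := hψ₁ _ (Finset.mem_insert_self _ _)
      rw [hneg] at this; linarith
    have hm : ψ (0, 1) ≤ 1 := by
      have := hψ₂ _ (Finset.mem_insert_self _ _)
      rw [hneg, LinearMap.sub_apply, affEval_one] at this; linarith
    -- Adding `ε` times a point of each polyhedron makes both heights positive.
    have hmem : ∀ ε : ℝ, 0 < ε → (1 + 2 * ε)⁻¹ • (x + ε • (z₁ + z₂)) ∈ T := by
      intro ε hε
      have e₁ : (ψ + ε • affEval z₁) (0, 1) = ψ (0, 1) + ε := by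
        simp [affEval_one]
      have e₂ : ((affEval x - ψ) + ε • affEval z₂) (0, 1) = 1 - ψ (0, 1) + ε := by
        simp [affEval_one]
      obtain ⟨y₁, hy₁⟩ := exists_point (ψ + ε • affEval z₁) (by rw [e₁]; linarith)
      obtain ⟨y₂, hy₂⟩ := exists_point ((affEval x - ψ) + ε • affEval z₂) (by rw [e₂]; linarith)
      rw [e₁] at hy₁
      rw [e₂] at hy₂
      have hm₁ : y₁ ∈ poly F₁ := by
        intro p hp
        have h := hy₁ p
        have h1 := hψ₁ p (Finset.mem_insert_of_mem hp)
        have h2 := mul_nonpos_of_nonneg_of_nonpos hε.le (hz₁ p hp)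
        simp only [LinearMap.add_apply, LinearMap.smul_apply, smul_eq_mul] at h
        by_contra! hc
        have := mul_pos (show 0 < ψ (0, 1) + ε by linarith) hc
        linarith
      have hm₂ : y₂ ∈ poly F₂ := by
        intro p hp
        have h := hy₂ p
        have h1 := hψ₂ p (Finset.mem_insert_of_mem hp)
        have h2 := mul_nonpos_of_nonneg_of_nonpos hε.le (hz₂ p hp)
        rw [LinearMap.add_apply, LinearMap.smul_apply, smul_eq_mul] at h
        by_contra! hc
        have := mul_pos (show 0 < 1 - ψ (0, 1) + ε by linarith) hc
        linarith
      have hpos : 0 < 1 + 2 * ε := by linarith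
      have hc := hconv (hT₁ hm₁) (hT₂ hm₂)
        (a := (1 + 2 * ε)⁻¹ * (ψ (0, 1) + ε)) (b := (1 + 2 * ε)⁻¹ * (1 - ψ (0, 1) + ε))
        (mul_nonneg (inv_nonneg.2 hpos.le) (by linarith))
        (mul_nonneg (inv_nonneg.2 hpos.le) (by linarith))
        (by field_simp; ring)
      convert hc using 1
      ext i
      have g₁ := hy₁ (Pi.single i 1, 0)
      have g₂ := hy₂ (Pi.single i 1, 0)
      simp only [LinearMap.add_apply, LinearMap.sub_apply, LinearMap.smul_apply, smul_eq_mul,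
        affEval_single] at g₁ g₂
      simp only [Pi.add_apply, Pi.smul_apply, smul_eq_mul, mul_assoc]
      rw [← g₁, ← g₂]
      ring
    have hcont : ContinuousAt (fun ε : ℝ => (1 + 2 * ε)⁻¹ • (x + ε • (z₁ + z₂))) 0 := by
      have hi : ContinuousAt (fun ε : ℝ => (1 + 2 * ε)⁻¹) 0 :=
        ContinuousAt.inv₀ (f := fun ε : ℝ => 1 + 2 * ε) (by fun_prop) (by norm_num)
      have hv : ContinuousAt (fun ε : ℝ => x + ε • (z₁ + z₂)) 0 := by fun_prop
      exact hi.smul hv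
    have hlim := hcont.tendsto.mono_left (nhdsWithin_le_nhds (s := Set.Ioi (0 : ℝ)))
    have := hT.mem_of_tendsto hlim (eventually_nhdsWithin_of_forall fun ε hε => hmem ε hε)
    simpa using this

lemma exists_hull_family {n : ℕ} (s : Finset (Finset ((Fin n → ℚ) × ℚ)))
    (hs : ∀ F ∈ s, (poly F).Nonempty) :
    ∃ G : Finset ((Fin n → ℚ) × ℚ), (∀ F ∈ s, poly F ⊆ poly G) ∧
      ∀ T : Set (Fin n → ℝ), IsClosed T → Convex ℝ T → (∀ F ∈ s, poly F ⊆ T) →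
        poly G ⊆ T := by
  classical
  induction s using Finset.induction_on with
  | empty =>
    -- The inequality `1 ≤ 0` has no solution.
    refine ⟨{(0, 1)}, by simp, fun T _ _ _ x hx => ?_⟩
    have := hx (0, 1) (by simp)
    rw [affEval_one] at this
    norm_num at this
  | insert F s _ ih =>
    obtain ⟨G, hG, hmin⟩ := ih fun F hF => hs F (Finset.mem_insert_of_mem hF)
    rcases (poly G).eq_empty_or_nonempty with he | hne
    · refine ⟨F, fun F' hF' => ?_, fun T _ _ h => h F (Finset.mem_insert_self _ _)⟩
      rcases Finset.mem_insert.1 hF' with rfl | hF'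
      · exact subset_rfl
      · exact (hG F' hF').trans (by simp [he])
    · obtain ⟨H, h1, h2, h3⟩ := exists_hull_pair F G (hs F (Finset.mem_insert_self _ _)) hne
      refine ⟨H, fun F' hF' => ?_, fun T hT hc h => ?_⟩
      · rcases Finset.mem_insert.1 hF' with rfl | hF'
        · exact h1
        · exact (hG F' hF').trans h2
      · exact h3 T hT hc (h F (Finset.mem_insert_self _ _))
          (hmin T hT hc fun F' hF' => h F' (Finset.mem_insert_of_mem hF'))

/-! ### Closed semi-linear sets -/

/-- A basic semi-linear set lies in a polyhedron, its relaxation, and if it is nonempty then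
every closed set containing it contains the relaxation. -/
lemma relaxation_subset {n : ℕ} (B : Set (Fin n → ℝ)) (hB : IsBasicSemilinear B) :
    ∃ F : Finset ((Fin n → ℚ) × ℚ), B ⊆ poly F ∧
      (B.Nonempty → ∀ T : Set (Fin n → ℝ), IsClosed T → B ⊆ T → poly F ⊆ T) := by
  classical
  obtain ⟨k, m, f, g, hf, hg, rfl⟩ := hB
  choose a b hab using hf
  choose c d hcd using hg
  have hf' : ∀ i x, f i x = affEval x (a i, b i) := hab
  have hg' : ∀ j x, g j x = affEval x (c j, d j) := hcd
  refine ⟨Finset.univ.image (fun i => (a i, b i)) ∪ Finset.univ.image (fun j => (c j, d j)),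
    ?_, ?_⟩
  · rintro x ⟨h1, h2⟩ p hp
    rcases Finset.mem_union.1 hp with hp | hp
    · obtain ⟨i, -, rfl⟩ := Finset.mem_image.1 hp
      exact hf' i x ▸ h1 i
    · obtain ⟨j, -, rfl⟩ := Finset.mem_image.1 hp
      exact hg' j x ▸ (h2 j).le
  · rintro ⟨z, hz1, hz2⟩ T hT hBT x hx
    have hmem : ∀ ε : ℝ, ε ∈ Set.Ioo (0 : ℝ) 1 → (1 - ε) • x + ε • z ∈ T := by
      rintro ε ⟨h0, h1⟩
      have h1' : 0 ≤ 1 - ε := by linarith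
      refine hBT ⟨fun i => ?_, fun j => ?_⟩
      · have hxi := hx (a i, b i) (Finset.mem_union_left _ (Finset.mem_image_of_mem _
          (Finset.mem_univ i)))
        have hzi := hz1 i
        rw [hf'] at hzi ⊢
        rw [affEval_comb _ _ _ _ (by ring)]
        have := mul_nonpos_of_nonneg_of_nonpos h1' hxi
        have := mul_nonpos_of_nonneg_of_nonpos h0.le hzi
        linarith
      · have hxj := hx (c j, d j) (Finset.mem_union_right _
          (Finset.mem_image.2 ⟨j, Finset.mem_univ j, rfl⟩))
        have hzj := hz2 j
        rw [hg'] at hzj ⊢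
        rw [affEval_comb _ _ _ _ (by ring)]
        have := mul_nonpos_of_nonneg_of_nonpos h1' hxj
        have := mul_neg_of_pos_of_neg h0 hzj
        linarith
    have hcont : Continuous (fun ε : ℝ => (1 - ε) • x + ε • z) := by fun_prop
    have hlim := (hcont.tendsto 0).mono_left (nhdsWithin_le_nhds (s := Set.Ioi (0 : ℝ)))
    have hev : ∀ᶠ ε in nhdsWithin (0 : ℝ) (Set.Ioi 0), (1 - ε) • x + ε • z ∈ T :=
      Filter.mem_of_superset (Ioo_mem_nhdsGT one_pos) hmem
    simpa using hT.mem_of_tendsto hlim hev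

theorem closed_semilinear_convex_iff_rational_polyhedron
    (n : ℕ) (S : Set (Fin n → ℝ)) (hS : IsSemilinear S) (hcl : IsClosed S) :
    Convex ℝ S ↔
      ∃ (m : ℕ) (f : Fin m → ((Fin n → ℝ) → ℝ)),
        (∀ i, IsRatAffine (f i)) ∧
        S = {x : Fin n → ℝ | ∀ i : Fin m, f i x ≤ 0} := by
  classical
  constructor
  · intro hconv
    obtain ⟨N, B, hB, hSB⟩ := hS
    have hBS : ∀ i, B i ⊆ S := fun i => hSB ▸ Set.subset_iUnion B i
    choose F hF hFmin using fun i => relaxation_subset (B i) (hB i)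
    obtain ⟨G, hG, hmin⟩ := exists_hull_family
      ((Finset.univ.filter fun i => (B i).Nonempty).image F) (by
        intro F' hF'
        obtain ⟨i, hi, rfl⟩ := Finset.mem_image.1 hF'
        exact (Finset.mem_filter.1 hi).2.mono (hF i))
    have hSG : S = poly G := by
      apply Set.Subset.antisymm
      · intro x hx
        rw [hSB] at hx
        obtain ⟨i, hi⟩ := Set.mem_iUnion.1 hx
        exact hG (F i) (Finset.mem_image_of_mem _ (by simpa using ⟨x, hi⟩)) (hF i hi)
      · refine hmin S hcl hconv fun F' hF' => ?_
        obtain ⟨i, hi, rfl⟩ := Finset.mem_image.1 hF'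
        exact hFmin i (Finset.mem_filter.1 hi).2 S hcl (hBS i)
    refine ⟨G.card, fun i x => affEval x (G.equivFin.symm i : (Fin n → ℚ) × ℚ),
      fun i => ⟨_, _, fun x => rfl⟩, ?_⟩
    rw [hSG]
    ext x
    refine ⟨fun h i => h _ (G.equivFin.symm i).2, fun h p hp => ?_⟩
    simpa using h (G.equivFin ⟨p, hp⟩)
  · rintro ⟨m, f, hf, rfl⟩ x hx y hy a b ha hb hab i
    obtain ⟨c, d, hcd⟩ := hf i
    have hf' : ∀ x, f i x = affEval x (c, d) := hcd
    have h1 := hx i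
    have h2 := hy i
    rw [hf'] at h1 h2 ⊢
    rw [affEval_comb _ _ _ _ hab]
    have := mul_nonpos_of_nonneg_of_nonpos ha h1
    have := mul_nonpos_of_nonneg_of_nonpos hb h2
    linarith
end

section
/- Let S ⊆ ℝ^n be a semi-linear set. Then there exist finitely many rational hyperplanes H_1, …, H_m ⊆ ℝ^n such that the topological boundary (frontier) of S is contained in H_1 ∪ … ∪ H_m. -/
/-- A rational hyperplane: the solution set of a nontrivial linear equation
with rational coefficients. -/
def IsRatHyperplane {n : ℕ} (H : Set (Fin n → ℝ)) : Prop :=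
  ∃ (a : Fin n → ℚ) (b : ℚ), a ≠ 0 ∧
    H = {x : Fin n → ℝ | (∑ i, (a i : ℝ) * x i) = (b : ℝ)}

/-- The frontier of `T` lies in a finite union of rational hyperplanes. The family is a finite set
of sets rather than a `Fin`-indexed one, so that unions of families need no reindexing. -/
def FrontierCovered {n : ℕ} (T : Set (Fin n → ℝ)) : Prop :=
  ∃ F : Set (Set (Fin n → ℝ)), F.Finite ∧ (∀ H ∈ F, IsRatHyperplane H) ∧ frontier T ⊆ ⋃₀ F

lemma FrontierCovered.compl {n : ℕ} {T : Set (Fin n → ℝ)} (h : FrontierCovered T) :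
    FrontierCovered Tᶜ := by
  simpa only [FrontierCovered, frontier_compl] using h

lemma FrontierCovered.iUnion {n : ℕ} {ι : Type*} [Finite ι] {T : ι → Set (Fin n → ℝ)}
    (h : ∀ i, FrontierCovered (T i)) : FrontierCovered (⋃ i, T i) := by
  choose F hfin hF hsub using h
  refine ⟨⋃ i, F i, Set.finite_iUnion hfin, ?_, ?_⟩
  · intro H hH
    obtain ⟨i, hi⟩ := Set.mem_iUnion.1 hH
    exact hF i H hi
  · rintro x ⟨hcl, hint⟩
    rw [closure_iUnion_of_finite] at hcl
    obtain ⟨i, hi⟩ := Set.mem_iUnion.1 hcl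
    obtain ⟨H, hH, hx⟩ :=
      hsub i ⟨hi, fun hx => hint (interior_mono (Set.subset_iUnion T i) hx)⟩
    exact ⟨H, Set.mem_iUnion.2 ⟨i, hH⟩, hx⟩

lemma FrontierCovered.iInter {n : ℕ} {ι : Type*} [Finite ι] {T : ι → Set (Fin n → ℝ)}
    (h : ∀ i, FrontierCovered (T i)) : FrontierCovered (⋂ i, T i) := by
  have := (FrontierCovered.iUnion fun i => (h i).compl).compl
  simpa only [Set.compl_iUnion, compl_compl] using this

lemma FrontierCovered.inter {n : ℕ} {A B : Set (Fin n → ℝ)} (hA : FrontierCovered A)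
    (hB : FrontierCovered B) : FrontierCovered (A ∩ B) := by
  rw [Set.inter_eq_iInter]
  exact FrontierCovered.iInter (by rintro (_ | _) <;> assumption)

lemma IsRatAffine.continuous {n : ℕ} {f : (Fin n → ℝ) → ℝ} (hf : IsRatAffine f) :
    Continuous f := by
  obtain ⟨a, b, h⟩ := hf
  rw [funext h]
  fun_prop

/-- The zero set of a rational affine function is a rational hyperplane, except when the linear
part vanishes; then the function is constant. -/
lemma IsRatAffine.const_or_hyperplane {n : ℕ} {f : (Fin n → ℝ) → ℝ} (hf : IsRatAffine f) :
    (∃ c : ℝ, ∀ x, f x = c) ∨ IsRatHyperplane {x | f x = 0} := by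
  obtain ⟨a, b, h⟩ := hf
  by_cases ha : a = 0
  · exact Or.inl ⟨b, fun x => by simp [h, ha]⟩
  · refine Or.inr ⟨a, -b, ha, ?_⟩
    ext x
    simp [h, eq_neg_iff_add_eq_zero]

lemma IsRatAffine.frontierCovered_le {n : ℕ} {f : (Fin n → ℝ) → ℝ} (hf : IsRatAffine f) :
    FrontierCovered {x | f x ≤ 0} := by
  rcases hf.const_or_hyperplane with ⟨c, hc⟩ | hH
  · refine ⟨∅, Set.finite_empty, by simp, ?_⟩
    by_cases h : c ≤ 0 <;> simp [hc, h]
  · refine ⟨{{x | f x = 0}}, Set.finite_singleton _, by simpa using hH, ?_⟩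
    simpa using frontier_le_subset_eq hf.continuous continuous_const

lemma IsRatAffine.frontierCovered_lt {n : ℕ} {f : (Fin n → ℝ) → ℝ} (hf : IsRatAffine f) :
    FrontierCovered {x | f x < 0} := by
  rcases hf.const_or_hyperplane with ⟨c, hc⟩ | hH
  · refine ⟨∅, Set.finite_empty, by simp, ?_⟩
    by_cases h : c < 0 <;> simp [hc, h]
  · refine ⟨{{x | f x = 0}}, Set.finite_singleton _, by simpa using hH, ?_⟩
    simpa using frontier_lt_subset_eq hf.continuous continuous_const

lemma IsBasicSemilinear.frontierCovered {n : ℕ} {B : Set (Fin n → ℝ)}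
    (hB : IsBasicSemilinear B) : FrontierCovered B := by
  obtain ⟨k, m, f, g, hf, hg, rfl⟩ := hB
  have := (FrontierCovered.iInter fun i => (hf i).frontierCovered_le).inter
    (FrontierCovered.iInter fun j => (hg j).frontierCovered_lt)
  convert this using 1
  ext x
  simp

theorem semilinear_frontier_subset_rational_hyperplanes
    (n : ℕ) (S : Set (Fin n → ℝ)) (hS : IsSemilinear S) :
    ∃ (m : ℕ) (H : Fin m → Set (Fin n → ℝ)),
      (∀ i, IsRatHyperplane (H i)) ∧ frontier S ⊆ ⋃ i, H i := by
  obtain ⟨N, B, hB, rfl⟩ := hS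
  obtain ⟨F, hfin, hF, hsub⟩ := FrontierCovered.iUnion fun i => (hB i).frontierCovered
  obtain ⟨m, H, -, rfl⟩ := hfin.fin_param
  exact ⟨m, H, fun i => hF _ ⟨i, rfl⟩, by rwa [Set.sUnion_range] at hsub⟩
end

section
/- Let S ⊆ ℝ^n be a nonempty Horn-DLR set and let h_1, …, h_m : ℝ^n → ℝ be affine functions with rational coefficients such that for each i ≤ m there is a point x ∈ S with h_i(x) ≠ 0. Then there exists a single point x ∈ S such that h_i(x) ≠ 0 for all i ≤ m simultaneously. -/
/-- A Horn-DLR clause: either a disjunction of at least one disequality,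
or a disjunction of disequalities (possibly none) together with one
non-strict inequality; all terms are rational affine functions. -/
def IsHornDLRClause {n : ℕ} (C : Set (Fin n → ℝ)) : Prop :=
  (∃ (k : ℕ), 1 ≤ k ∧ ∃ f : Fin k → ((Fin n → ℝ) → ℝ),
      (∀ i, IsRatAffine (f i)) ∧
      C = {x : Fin n → ℝ | ∃ i : Fin k, f i x ≠ 0}) ∨
  (∃ (k : ℕ) (f : Fin k → ((Fin n → ℝ) → ℝ)) (g : (Fin n → ℝ) → ℝ),
      (∀ i, IsRatAffine (f i)) ∧ IsRatAffine g ∧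
      C = {x : Fin n → ℝ | (∃ i : Fin k, f i x ≠ 0) ∨ g x ≤ 0})

/-- A Horn-DLR set: a finite intersection of Horn-DLR clauses. -/
def IsHornDLR {n : ℕ} (S : Set (Fin n → ℝ)) : Prop :=
  ∃ (N : ℕ) (C : Fin N → Set (Fin n → ℝ)),
    (∀ j, IsHornDLRClause (C j)) ∧ S = ⋂ j, C j

open Filter

theorem IsRatAffine.apply_line {n : ℕ} {f : (Fin n → ℝ) → ℝ} (hf : IsRatAffine f)
    (x y : Fin n → ℝ) (t : ℝ) : f (x + t • (y - x)) = f x + t * (f y - f x) := by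
  obtain ⟨a, b, h⟩ := hf
  simp only [h, Pi.add_apply, Pi.smul_apply, Pi.sub_apply, smul_eq_mul, add_sub_add_right_eq_sub,
    ← Finset.sum_sub_distrib, Finset.mul_sum]
  rw [add_right_comm, ← Finset.sum_add_distrib]
  congr 1
  exact Finset.sum_congr rfl fun i _ => by ring

theorem IsRatAffine.eventually_line_ne_zero {n : ℕ} {f : (Fin n → ℝ) → ℝ} (hf : IsRatAffine f)
    {x y : Fin n → ℝ} (hxy : f x ≠ 0 ∨ f y ≠ 0) :
    ∀ᶠ t : ℝ in cofinite, f (x + t • (y - x)) ≠ 0 := by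
  rw [eventually_cofinite]
  -- Two distinct zeros in `t` would force `f x = f y = 0`.
  refine Set.Subsingleton.finite fun s hs t ht => ?_
  simp only [Set.mem_ofPred_eq, not_not, hf.apply_line] at hs ht
  by_contra hst
  have hslope : f y - f x = 0 := by
    have hprod : (s - t) * (f y - f x) = 0 := by linear_combination hs - ht
    exact (mul_eq_zero.mp hprod).resolve_left (sub_ne_zero.mpr hst)
  rw [hslope, mul_zero, add_zero] at hs
  rcases hxy with h | h
  · exact h hs
  · exact h (by linarith)

theorem IsHornDLRClause.eventually_line {n : ℕ} {C : Set (Fin n → ℝ)} (hC : IsHornDLRClause C)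
    {x y : Fin n → ℝ} (hx : x ∈ C) (hy : y ∈ C) :
    ∀ᶠ t : ℝ in cofinite, t ∈ Set.Icc (0 : ℝ) 1 → x + t • (y - x) ∈ C := by
  rcases hC with ⟨k, -, f, hf, rfl⟩ | ⟨k, f, g, hf, hg, rfl⟩
  · obtain ⟨i, hi⟩ := hx
    filter_upwards [(hf i).eventually_line_ne_zero (y := y) (Or.inl hi)] with t ht _
    exact ⟨i, ht⟩
  · by_cases hex : ∃ i, f i x ≠ 0 ∨ f i y ≠ 0
    · obtain ⟨i, hi⟩ := hex
      filter_upwards [(hf i).eventually_line_ne_zero hi] with t ht _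
      exact Or.inl ⟨i, ht⟩
    · have hgx : g x ≤ 0 := hx.resolve_left fun ⟨i, hi⟩ => hex ⟨i, Or.inl hi⟩
      have hgy : g y ≤ 0 := hy.resolve_left fun ⟨i, hi⟩ => hex ⟨i, Or.inr hi⟩
      refine Eventually.of_forall fun t ht => Or.inr ?_
      rw [hg.apply_line]
      nlinarith [ht.1, ht.2]

theorem IsHornDLR.eventually_line {n : ℕ} {S : Set (Fin n → ℝ)} (hS : IsHornDLR S)
    {x y : Fin n → ℝ} (hx : x ∈ S) (hy : y ∈ S) :
    ∀ᶠ t : ℝ in cofinite, t ∈ Set.Icc (0 : ℝ) 1 → x + t • (y - x) ∈ S := by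
  obtain ⟨N, C, hC, rfl⟩ := hS
  rw [Set.mem_iInter] at hx hy
  filter_upwards [eventually_all.mpr fun j => (hC j).eventually_line (hx j) (hy j)] with t ht ht01
  exact Set.mem_iInter.mpr fun j => ht j ht01

theorem hornDLR_simultaneous_disequalities
    (n m : ℕ) (S : Set (Fin n → ℝ)) (hS : IsHornDLR S) (hne : S.Nonempty)
    (h : Fin m → ((Fin n → ℝ) → ℝ)) (haff : ∀ i, IsRatAffine (h i))
    (hsep : ∀ i : Fin m, ∃ x ∈ S, h i x ≠ 0) :
    ∃ x ∈ S, ∀ i : Fin m, h i x ≠ 0 := by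
  suffices H : ∀ s : Finset (Fin m), ∃ x ∈ S, ∀ i ∈ s, h i x ≠ 0 by
    obtain ⟨x, hx, hx'⟩ := H Finset.univ
    exact ⟨x, hx, fun i => hx' i (Finset.mem_univ i)⟩
  intro s
  induction s using Finset.induction_on with
  | empty => exact hne.imp fun x hx => ⟨hx, by simp⟩
  | insert j s _ ih =>
    obtain ⟨x, hx, hxs⟩ := ih
    obtain ⟨y, hy, hyj⟩ := hsep j
    have hall : ∀ᶠ t : ℝ in cofinite, ∀ i ∈ insert j s, h i (x + t • (y - x)) ≠ 0 := by
      rw [Finset.eventually_all]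
      intro i hi
      refine (haff i).eventually_line_ne_zero ?_
      rcases Finset.mem_insert.mp hi with rfl | hi
      · exact Or.inr hyj
      · exact Or.inl (hxs i hi)
    have hinf : ∃ᶠ t : ℝ in cofinite, t ∈ Set.Icc (0 : ℝ) 1 :=
      frequently_cofinite_iff_infinite.mpr (Set.Icc_infinite zero_lt_one)
    obtain ⟨t, ht01, htS, hth⟩ := (hinf.and_eventually ((hS.eventually_line hx hy).and hall)).exists
    exact ⟨x + t • (y - x), htS ht01, hth⟩
end
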